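/- Let γ > 0 and c ∈ ℝ, and let u be a twice continuously differentiable function on an open subset U of {(t,x) ∈ ℝ² : x ≠ 0, |x| − t > −1}. Then on U the following divergence identity holds: 2(1 + w_γ)² ∂_t u · (□u + c² u) = ∂_t [ (1 + w_γ)² ( (∂_t u)² + (∂_x u)² + c² u² ) ] − 2 ∂_x [ (1 + w_γ)² ∂_t u ∂_x u ] + 2 ( w̄_γ + γ w_γ (1 + |x| − t)^{−1} ) (1 + w_γ) ( (∂̃₁ u)² + c² u² ), where ∂̃₁u = (x/|x|) ∂_t u + ∂_x u. -/

import Mathlib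

open MeasureTheory

/-- The bump function `ρ(x) = exp(4/(4x²−1))` for `|x| < 1/2`, and `0` otherwise. -/
noncomputable def rho (x : ℝ) : ℝ := if |x| < 1/2 then Real.exp (4 / (4*x^2 - 1)) else 0

/-- The smooth cutoff `χ(x) = (∫_{−∞}^{x+1/2} ρ)/(∫_ℝ ρ)`. -/
noncomputable def chi (x : ℝ) : ℝ := (∫ y in Set.Iic (x + 1/2), rho y) / ∫ y, rho y

/-- Partial derivative in `t` of a function `u(t,x)`. -/
noncomputable def Dt (u : ℝ → ℝ → ℝ) : ℝ → ℝ → ℝ := fun t x => deriv (fun τ => u τ x) t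

/-- Partial derivative in `x` of a function `u(t,x)`. -/
noncomputable def Dx (u : ℝ → ℝ → ℝ) : ℝ → ℝ → ℝ := fun t x => deriv (fun y => u t y) x

/-- The Lorentz boost `L u = x ∂_t u + t ∂_x u`. -/
noncomputable def Lop (u : ℝ → ℝ → ℝ) : ℝ → ℝ → ℝ := fun t x => x * Dt u t x + t * Dx u t x

/-- The 1+1-dimensional wave operator `□u = ∂_t∂_t u − ∂_x∂_x u`. -/
noncomputable def Box (u : ℝ → ℝ → ℝ) : ℝ → ℝ → ℝ := fun t x => Dt (Dt u) t x - Dx (Dx u) t x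

/-- The null derivative `∂̃₁ u = (x/|x|) ∂_t u + ∂_x u` (for `x ≠ 0`). -/
noncomputable def Nd (u : ℝ → ℝ → ℝ) : ℝ → ℝ → ℝ := fun t x => (x/|x|) * Dt u t x + Dx u t x

/-- The weight `w_γ(t,x) = χ(|x|−t)·(|x|−t+1)^γ`. -/
noncomputable def wgam (γ t x : ℝ) : ℝ := chi (|x| - t) * (|x| - t + 1) ^ γ

/-- The auxiliary weight `w̄_γ(t,x) = χ′(|x|−t)·(|x|−t+1)^γ`. -/
noncomputable def wbar (γ t x : ℝ) : ℝ := deriv chi (|x| - t) * (|x| - t + 1) ^ γ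

lemma aux_rho_eq (x : ℝ) : rho x = expNegInvGlue (1/4 - x^2) := by
  unfold rho expNegInvGlue
  have h : |x| < 1/2 ↔ ¬ (1/4 - x^2 ≤ 0) := by
    rw [abs_lt]
    constructor
    · rintro ⟨h1, h2⟩; nlinarith
    · intro h; push Not at h; constructor <;> nlinarith
  by_cases hx : |x| < 1/2
  · rw [if_pos hx, if_neg (h.1 hx)]
    have h3 := h.1 hx
    push Not at h3
    congr 1
    have h4 : 4 * x^2 - 1 ≠ 0 := by linarith
    have h5 : 1/4 - x^2 ≠ 0 := h3.ne'
    rw [← one_div, ← neg_div, div_eq_div_iff h4 h5]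
    ring
  · rw [if_neg hx, if_pos]
    by_contra h'
    exact hx (h.2 h')

lemma aux_rho_cont : Continuous rho := by
  have h : rho = fun x => expNegInvGlue (1/4 - x^2) := funext aux_rho_eq
  rw [h]
  exact (expNegInvGlue.contDiff (n := 0)).continuous.comp (by fun_prop)

lemma aux_rho_int : Integrable rho := by
  refine aux_rho_cont.integrable_of_hasCompactSupport ?_
  refine HasCompactSupport.intro (isCompact_Icc (a := (-1/2 : ℝ)) (b := 1/2)) ?_
  intro x hx
  unfold rho
  rw [if_neg]
  intro h
  rw [abs_lt] at h
  exact hx ⟨by linarith, by linarith⟩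

lemma aux_chi_diff (x : ℝ) : DifferentiableAt ℝ chi x := by
  have h : chi = fun x => ((∫ y in Set.Iic (0:ℝ), rho y) + ∫ y in (0:ℝ)..(x + 1/2), rho y) / ∫ y, rho y := by
    funext z
    unfold chi
    rw [← intervalIntegral.integral_Iic_sub_Iic aux_rho_int.integrableOn aux_rho_int.integrableOn]
    ring
  rw [h]
  refine DifferentiableAt.div_const (DifferentiableAt.const_add _ ?_) _
  have h1 : HasDerivAt (fun b => ∫ y in (0:ℝ)..b, rho y) (rho (x+1/2)) (x+1/2) :=
    aux_rho_cont.integral_hasStrictDerivAt 0 (x+1/2) |>.hasDerivAt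
  exact (HasDerivAt.comp_add_const x (1/2) h1).differentiableAt

lemma aux_w (γ s : ℝ) (hs : -1 < s) :
    HasDerivAt (fun s => chi s * (s + 1) ^ γ)
      (deriv chi s * (s+1)^γ + γ * (chi s * (s+1)^γ) * (s+1)⁻¹) s := by
  have hp : 0 < s + 1 := by linarith
  have h1 := (aux_chi_diff s).hasDerivAt
  have h2 := ((hasDerivAt_id s).add_const (1:ℝ)).rpow_const (p := γ) (Or.inl hp.ne')
  refine (h1.mul h2).congr_deriv ?_
  simp only [id, Real.rpow_sub_one hp.ne']
  field_simp

lemma aux_slice_t (f : ℝ × ℝ → ℝ) (p : ℝ × ℝ) (h : DifferentiableAt ℝ f p) :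
    HasDerivAt (fun t => f (t, p.2)) (fderiv ℝ f p (1, 0)) p.1 := by
  have h1 : HasDerivAt (fun t : ℝ => (t, p.2)) ((1:ℝ), (0:ℝ)) p.1 :=
    (hasDerivAt_id p.1).prodMk (hasDerivAt_const p.1 p.2)
  exact HasFDerivAt.comp_hasDerivAt (f := fun t : ℝ => (t, p.2)) p.1 h.hasFDerivAt h1

lemma aux_slice_x (f : ℝ × ℝ → ℝ) (p : ℝ × ℝ) (h : DifferentiableAt ℝ f p) :
    HasDerivAt (fun x => f (p.1, x)) (fderiv ℝ f p (0, 1)) p.2 := by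
  have h1 : HasDerivAt (fun x : ℝ => (p.1, x)) ((0:ℝ), (1:ℝ)) p.2 :=
    (hasDerivAt_const p.2 p.1).prodMk (hasDerivAt_id p.2)
  exact HasFDerivAt.comp_hasDerivAt (f := fun x : ℝ => (p.1, x)) p.2 h.hasFDerivAt h1

/-- the weighted divergence identity
`2(1+w_γ)²∂_t u·(□u + c²u) = ∂_t[(1+w_γ)²((∂_t u)² + (∂_x u)² + c²u²)]
 − 2∂_x[(1+w_γ)²∂_t u ∂_x u] + 2(w̄_γ + γw_γ(1+|x|−t)⁻¹)(1+w_γ)((∂̃₁u)² + c²u²)`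
on an open subset of `{x ≠ 0, |x|−t > −1}`. -/
theorem stmt15 (γ c : ℝ) (hγ : 0 < γ) (u : ℝ → ℝ → ℝ) (U : Set (ℝ × ℝ)) (hU : IsOpen U)
    (hUsub : U ⊆ {p : ℝ × ℝ | p.2 ≠ 0 ∧ -1 < |p.2| - p.1})
    (hu : ContDiffOn ℝ 2 (fun p : ℝ × ℝ => u p.1 p.2) U) :
    ∀ p ∈ U,
      2 * (1 + wgam γ p.1 p.2)^2 * Dt u p.1 p.2 * (Box u p.1 p.2 + c^2 * u p.1 p.2) =
        Dt (fun t x => (1 + wgam γ t x)^2 *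
            ((Dt u t x)^2 + (Dx u t x)^2 + c^2 * (u t x)^2)) p.1 p.2
        - 2 * Dx (fun t x => (1 + wgam γ t x)^2 * Dt u t x * Dx u t x) p.1 p.2
        + 2 * (wbar γ p.1 p.2 + γ * wgam γ p.1 p.2 * (1 + |p.2| - p.1)⁻¹)
            * (1 + wgam γ p.1 p.2) * ((Nd u p.1 p.2)^2 + c^2 * (u p.1 p.2)^2) := by
  intro p hp
  obtain ⟨hx0, hs⟩ := hUsub hp
  set f : ℝ × ℝ → ℝ := fun p => u p.1 p.2 with hf
  have hnhds : ∀ q ∈ U, U ∈ nhds q := fun q hq => hU.mem_nhds hq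
  have hdiff : ∀ q ∈ U, DifferentiableAt ℝ f q := fun q hq =>
    (hu.contDiffAt (hnhds q hq)).differentiableAt (by norm_num)
  have hDt : ∀ q ∈ U, Dt u q.1 q.2 = fderiv ℝ f q (1, 0) := fun q hq =>
    (aux_slice_t f q (hdiff q hq)).deriv
  have hDx : ∀ q ∈ U, Dx u q.1 q.2 = fderiv ℝ f q (0, 1) := fun q hq =>
    (aux_slice_x f q (hdiff q hq)).deriv
  have hc := hu.contDiffAt (hnhds p hp)
  have hf' : DifferentiableAt ℝ (fderiv ℝ f) p :=
    (hc.fderiv_right (m := 1) (by norm_num)).differentiableAt (by norm_num)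
  have hsym : IsSymmSndFDerivAt ℝ f p := hc.isSymmSndFDerivAt (by simp)
  have key : ∀ v : ℝ × ℝ, HasFDerivAt (fun q => fderiv ℝ f q v)
      ((ContinuousLinearMap.apply ℝ ℝ v).comp (fderiv ℝ (fderiv ℝ f) p)) p := fun v =>
    (ContinuousLinearMap.apply ℝ ℝ v).hasFDerivAt.comp p hf'.hasFDerivAt
  have hT : HasFDerivAt (fun q : ℝ × ℝ => Dt u q.1 q.2) _ p := (key (1,0)).congr_of_eventuallyEq
    (Filter.eventually_of_mem (hnhds p hp) hDt)
  have hX : HasFDerivAt (fun q : ℝ × ℝ => Dx u q.1 q.2) _ p := (key (0,1)).congr_of_eventuallyEq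
    (Filter.eventually_of_mem (hnhds p hp) hDx)
  have hTt := aux_slice_t _ p hT.differentiableAt
  have hTx := aux_slice_x _ p hT.differentiableAt
  have hXt := aux_slice_t _ p hX.differentiableAt
  have hXx := aux_slice_x _ p hX.differentiableAt
  have hmix : fderiv ℝ (fun q : ℝ × ℝ => Dt u q.1 q.2) p (0,1)
      = fderiv ℝ (fun q : ℝ × ℝ => Dx u q.1 q.2) p (1,0) := by
    rw [hT.fderiv, hX.fderiv]
    exact hsym (0,1) (1,0)
  rw [← hmix] at hXt
  have hut := aux_slice_t f p (hdiff p hp)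
  rw [← hDt p hp] at hut
  have hbox : Box u p.1 p.2 = _ - _ := congrArg₂ (· - ·) hTt.deriv hXx.deriv
  generalize fderiv ℝ (fun q : ℝ × ℝ => Dt u q.1 q.2) p (1,0) = utt at *
  generalize fderiv ℝ (fun q : ℝ × ℝ => Dt u q.1 q.2) p (0,1) = utx at *
  generalize fderiv ℝ (fun q : ℝ × ℝ => Dx u q.1 q.2) p (0,1) = uxx at *
  have hw := aux_w γ (|p.2| - p.1) hs
  have hwt : HasDerivAt (fun t => wgam γ t p.2)
      (-(wbar γ p.1 p.2 + γ * wgam γ p.1 p.2 * (1 + |p.2| - p.1)⁻¹)) p.1 := by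
    have := HasDerivAt.comp p.1 hw ((hasDerivAt_id p.1).const_sub |p.2|)
    refine HasDerivAt.congr_deriv this ?_
    unfold wbar wgam
    rw [show 1 + |p.2| - p.1 = |p.2| - p.1 + 1 by ring]
    ring
  obtain ⟨s, hs1, hs2, hsd⟩ : ∃ s : ℝ, s^2 = 1 ∧ p.2 / |p.2| = s ∧
      HasDerivAt (fun x : ℝ => |x|) s p.2 := by
    rcases lt_or_gt_of_ne hx0 with h | h
    · refine ⟨-1, by norm_num, ?_, hasDerivAt_abs_neg h⟩
      rw [abs_of_neg h, div_neg, div_self h.ne]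
    · refine ⟨1, by norm_num, ?_, hasDerivAt_abs_pos h⟩
      rw [abs_of_pos h, div_self h.ne']
  have hwx : HasDerivAt (fun x => wgam γ p.1 x)
      ((wbar γ p.1 p.2 + γ * wgam γ p.1 p.2 * (1 + |p.2| - p.1)⁻¹) * s) p.2 := by
    have := HasDerivAt.comp p.2 hw (hsd.sub_const p.1)
    refine HasDerivAt.congr_deriv this ?_
    unfold wbar wgam
    rw [show 1 + |p.2| - p.1 = |p.2| - p.1 + 1 by ring]
  have hNd : Nd u p.1 p.2 = s * Dt u p.1 p.2 + Dx u p.1 p.2 := by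
    unfold Nd; rw [hs2]
  have e1 := (((hwt.const_add 1).pow 2).mul
    (((hTt.pow 2).add (hXt.pow 2)).add ((hut.pow 2).const_mul (c^2)))).deriv
  have e2 := ((((hwx.const_add 1).pow 2).mul hTx).mul hXx).deriv
  have E1 : Dt (fun t x => (1 + wgam γ t x)^2 *
            ((Dt u t x)^2 + (Dx u t x)^2 + c^2 * (u t x)^2)) p.1 p.2 = _ := e1
  have E2 : Dx (fun t x => (1 + wgam γ t x)^2 * Dt u t x * Dx u t x) p.1 p.2 = _ := e2
  rw [E1, E2, hbox, hNd]
  simp only [hf, Pi.pow_apply, Pi.add_apply, Pi.mul_apply]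
  generalize wbar γ p.1 p.2 + γ * wgam γ p.1 p.2 * (1 + |p.2| - p.1)⁻¹ = F
  push_cast
  linear_combination (-2 * F * (1 + wgam γ p.1 p.2) * (Dt u p.1 p.2)^2) * hs1
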